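/- (Correctness lemma of the polynomial-multiplication algorithm, egalitarian case.) Fix m, k ≥ 1, a threshold η : ℕ, and a committee scoring function β : Finset (Fin m) → ℕ, and let q[s,j] be the recursively defined polynomials described in the context. Then for all j ≥ 1 and s : ℕ: q[s,j] ≠ 0 if and only if there exists a Finset 𝒮 of committees with 𝒮.card = j, whose members are pairwise disjoint, each of cardinality k and with β S ≥ η for every S ∈ 𝒮, such that the union of the members of 𝒮 has cardinality s. -/

import Mathlib

/-!
For two sets `Y`, `Z` of candidates, `χ(Y) + χ(Z) = χ(Y ∆ Z) + 2 χ(Y ∩ Z)`. The Hamming weight is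
subadditive and unchanged by doubling, so the weight of `χ(Y) + χ(Z)` is at most
`|Y ∆ Z| + |Y ∩ Z| = |Y ∪ Z|`; it therefore equals `|Y| + |Z|` exactly when `Y` and `Z` are
disjoint.

Over `ℕ` nothing cancels, so the support of a product is the sumset of the supports. Projecting to
Hamming weight `a + b` a product whose factors encode families `𝒜` of `a`-sets and `ℬ` of `b`-sets
leaves precisely the encodings of the disjoint unions `Y ∪ Z` with `Y ∈ 𝒜` and `Z ∈ ℬ`. By induction
the support of `q[s,j]` encodes the `j`-fold disjoint unions of admissible committees if `s = j k`,
and is empty otherwise.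
-/

open Polynomial

/-- The characteristic-vector encoding of a set of candidates. -/
def chi {m : ℕ} (Y : Finset (Fin m)) : ℕ := ∑ i ∈ Y, 2 ^ (i : ℕ)

/-- The Hamming weight of a natural number: the number of ones in its binary
representation. -/
def hammingWeight (e : ℕ) : ℕ := (Nat.digits 2 e).sum

/-- The Hamming projection of a polynomial to `s`: keep exactly the monomials whose
exponent has Hamming weight `s`. -/
noncomputable def hammingProj (s : ℕ) (p : Polynomial ℕ) : Polynomial ℕ :=
  ∑ e ∈ p.support.filter (fun e => hammingWeight e = s), C (p.coeff e) * X ^ e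

/-- The representative polynomial: change all nonzero coefficients to `1`. -/
noncomputable def reprPoly (p : Polynomial ℕ) : Polynomial ℕ :=
  ∑ e ∈ p.support, (X : Polynomial ℕ) ^ e

/-- The recursively defined polynomials `q[s,j]` of the polynomial-multiplication
algorithm (egalitarian case), with the number `j` of committees as first argument. -/
noncomputable def polyQ (m k η : ℕ) (β : Finset (Fin m) → ℕ) :
    ℕ → ℕ → Polynomial ℕ
  | 0, _ => 0
  | 1, s =>
      if s = k then
        ∑ Y ∈ Finset.univ.filter (fun Y : Finset (Fin m) => Y.card = k ∧ η ≤ β Y),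
          (X : Polynomial ℕ) ^ chi Y
      else 0
  | (j + 2), s =>
      reprPoly (hammingProj s
        ((∑ Y ∈ Finset.univ.filter (fun Y : Finset (Fin m) => Y.card = k ∧ η ≤ β Y),
            (X : Polynomial ℕ) ^ chi Y) * polyQ m k η β (j + 1) (s - k)))

open scoped FinsetFamily Pointwise

-- By Legendre's formula, `(p - 1) * v_p(n!)` is `n` minus the digit sum of `n`.
theorem sum_digits_add_le (p : ℕ) [Fact p.Prime] (a b : ℕ) :
    (p.digits (a + b)).sum ≤ (p.digits a).sum + (p.digits b).sum := by
  have hval : padicValNat p a.factorial + padicValNat p b.factorial ≤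
      padicValNat p (a + b).factorial := by
    rw [← padicValNat.mul a.factorial_ne_zero b.factorial_ne_zero]
    exact padicValNat_dvd_iff_le (a + b).factorial_ne_zero |>.1
      (pow_padicValNat_dvd.trans (Nat.factorial_mul_factorial_dvd_factorial_add a b))
  have hmul := Nat.mul_le_mul_left (p - 1) hval
  simp only [mul_add, sub_one_mul_padicValNat_factorial] at hmul
  have ha := p.digit_sum_le a
  have hb := p.digit_sum_le b
  have hab := p.digit_sum_le (a + b)
  lia

theorem hammingWeight_add_le (a b : ℕ) :
    hammingWeight (a + b) ≤ hammingWeight a + hammingWeight b :=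
  sum_digits_add_le 2 a b

theorem hammingWeight_eq_length_bitIndices (n : ℕ) :
    hammingWeight n = n.bitIndices.length := by
  induction n using Nat.binaryRec' with
  | zero => simp [hammingWeight]
  | bit b n hn ih =>
    rw [hammingWeight, Nat.digits_two_eq_bits] at ih ⊢
    rw [Nat.bits_append_bit n b hn]
    cases b <;> simp [Nat.bit, ih, add_comm 1]

theorem hammingWeight_two_mul (n : ℕ) : hammingWeight (2 * n) = hammingWeight n := by
  simp [hammingWeight_eq_length_bitIndices]

theorem hammingWeight_sum_two_pow (s : Finset ℕ) : hammingWeight (∑ i ∈ s, 2 ^ i) = s.card := by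
  rw [hammingWeight_eq_length_bitIndices, ← List.toFinset_card_of_nodup Nat.bitIndices_nodup,
    Finset.toFinset_bitIndices_sum_two_pow]

section Polynomial

variable {R ι : Type*} [Semiring R]

theorem support_sum_X_pow [CharZero R] (s : Finset ι) (f : ι → ℕ) :
    (∑ i ∈ s, (X : R[X]) ^ f i).support = s.image f := by
  ext e
  simp [coeff_X_pow, eq_comm (a := e)]

theorem support_mul_eq_add [PartialOrder R] [CanonicallyOrderedAdd R] [NoZeroDivisors R]
    (p q : R[X]) : (p * q).support = p.support + q.support := by
  ext e
  simp only [mem_support_iff, coeff_mul, ne_eq, Finset.sum_eq_zero_iff, Prod.forall,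
    not_forall, not_or, Finset.HasAntidiagonal.mem_antidiagonal, mul_eq_zero, Finset.mem_add]
  tauto

theorem support_reprPoly (p : ℕ[X]) : (reprPoly p).support = p.support :=
  (support_sum_X_pow p.support id).trans Finset.image_id

theorem coeff_hammingProj (s : ℕ) (p : ℕ[X]) (e : ℕ) :
    (hammingProj s p).coeff e = if hammingWeight e = s then p.coeff e else 0 := by
  simp only [hammingProj, finsetSum_coeff, coeff_C_mul, coeff_X_pow, mul_ite, mul_one, mul_zero,
    Finset.sum_ite_eq, Finset.mem_filter, mem_support_iff]
  grind

theorem support_hammingProj (s : ℕ) (p : ℕ[X]) :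
    (hammingProj s p).support = {e ∈ p.support | hammingWeight e = s} := by
  ext e
  simp [coeff_hammingProj, and_comm]

end Polynomial

section Chi

variable {m : ℕ} {Y Z : Finset (Fin m)}

theorem hammingWeight_chi (Y : Finset (Fin m)) : hammingWeight (chi Y) = Y.card := by
  simpa [chi] using hammingWeight_sum_two_pow (Y.map Fin.valEmbedding)

theorem chi_union (h : Disjoint Y Z) : chi (Y ∪ Z) = chi Y + chi Z :=
  Finset.sum_union h

theorem chi_add_chi (Y Z : Finset (Fin m)) :
    chi Y + chi Z = chi ((Y ∪ Z) \ (Y ∩ Z)) + 2 * chi (Y ∩ Z) := by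
  have hunion : chi (Y ∪ Z) + chi (Y ∩ Z) = chi Y + chi Z := Finset.sum_union_inter
  have hsdiff : chi ((Y ∪ Z) \ (Y ∩ Z)) + chi (Y ∩ Z) = chi (Y ∪ Z) :=
    Finset.sum_sdiff Finset.inter_subset_union
  lia

theorem hammingWeight_chi_add_chi_le (Y Z : Finset (Fin m)) :
    hammingWeight (chi Y + chi Z) ≤ (Y ∪ Z).card :=
  calc hammingWeight (chi Y + chi Z)
      ≤ hammingWeight (chi ((Y ∪ Z) \ (Y ∩ Z))) + hammingWeight (2 * chi (Y ∩ Z)) :=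
        chi_add_chi Y Z ▸ hammingWeight_add_le _ _
    _ = ((Y ∪ Z) \ (Y ∩ Z)).card + (Y ∩ Z).card := by
        rw [hammingWeight_two_mul, hammingWeight_chi, hammingWeight_chi]
    _ = (Y ∪ Z).card := Finset.card_sdiff_add_card_eq_card Finset.inter_subset_union

theorem hammingWeight_chi_add_chi_eq_iff :
    hammingWeight (chi Y + chi Z) = Y.card + Z.card ↔ Disjoint Y Z := by
  refine ⟨fun h ↦ ?_, fun h ↦ ?_⟩
  · exact Finset.card_union_eq_card_add_card.1 <|
      (Finset.card_union_le Y Z).antisymm (h ▸ hammingWeight_chi_add_chi_le Y Z)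
  · rw [← chi_union h, hammingWeight_chi, Finset.card_union_of_disjoint h]

theorem support_hammingProj_mul_of_sized {𝒜 ℬ : Finset (Finset (Fin m))} {a b : ℕ} {p q : ℕ[X]}
    (h𝒜 : (𝒜 : Set (Finset (Fin m))).Sized a) (hℬ : (ℬ : Set (Finset (Fin m))).Sized b)
    (hp : p.support = 𝒜.image chi) (hq : q.support = ℬ.image chi) :
    (hammingProj (a + b) (p * q)).support = (𝒜 ○ ℬ).image chi := by
  have hdisj {Y} (hY : Y ∈ 𝒜) {Z} (hZ : Z ∈ ℬ) :
      hammingWeight (chi Y + chi Z) = a + b ↔ Disjoint Y Z := by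
    rw [← h𝒜 hY, ← hℬ hZ, hammingWeight_chi_add_chi_eq_iff]
  ext e
  simp only [support_hammingProj, support_mul_eq_add, hp, hq, Finset.mem_filter, Finset.mem_add,
    Finset.mem_image, Finset.mem_disjSups]
  constructor
  · rintro ⟨⟨_, ⟨Y, hY, rfl⟩, _, ⟨Z, hZ, rfl⟩, rfl⟩, hweight⟩
    have hYZ := (hdisj hY hZ).1 hweight
    exact ⟨Y ∪ Z, ⟨Y, hY, Z, hZ, hYZ, rfl⟩, chi_union hYZ⟩
  · rintro ⟨_, ⟨Y, hY, Z, hZ, hYZ, rfl⟩, rfl⟩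
    rw [Finset.sup_eq_union, chi_union hYZ]
    exact ⟨⟨_, ⟨Y, hY, rfl⟩, _, ⟨Z, hZ, rfl⟩, rfl⟩, (hdisj hY hZ).2 hYZ⟩

end Chi

section DisjSupsPow

section Lattice

variable {α : Type*} [DistribLattice α] [OrderBot α] [DecidableEq α]
  [DecidableRel (α := α) Disjoint]

/-- The `n`-fold disjoint supremum `s ○ ⋯ ○ s`: for a family `s` of sets, the unions obtained by
successively adding members of `s` disjoint from what has been collected so far. -/
def disjSupsPow (s : Finset α) : ℕ → Finset α
  | 0 => {⊥}
  | n + 1 => s ○ disjSupsPow s n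

theorem disjSupsPow_one (s : Finset α) : disjSupsPow s 1 = s := by
  ext a
  simp [disjSupsPow]

theorem mem_disjSupsPow {s : Finset α} (hs : ⊥ ∉ s) {n : ℕ} {a : α} :
    a ∈ disjSupsPow s n ↔
      ∃ t ⊆ s, t.card = n ∧ (t : Set α).PairwiseDisjoint id ∧ t.sup id = a := by
  induction n generalizing a with
  | zero => simp +contextual [disjSupsPow, eq_comm]
  | succ n ih =>
    simp only [disjSupsPow, Finset.mem_disjSups, ih]
    constructor
    · rintro ⟨b, hb, _, ⟨t, hts, rfl, ht, rfl⟩, hbt, rfl⟩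
      have hbt' : b ∉ t := fun hmem ↦
        hs (hbt.eq_bot_of_le (Finset.le_sup (f := id) hmem) ▸ hb)
      refine ⟨insert b t, Finset.insert_subset hb hts, Finset.card_insert_of_notMem hbt', ?_,
        Finset.sup_insert⟩
      rw [Finset.coe_insert]
      exact ht.insert fun c hc _ ↦ Finset.disjoint_sup_right.1 hbt hc
    · rintro ⟨t', hts, hcard, ht, rfl⟩
      obtain ⟨b, t, hbt, rfl, rfl⟩ := Finset.card_eq_succ.1 hcard
      rw [Finset.coe_insert, Set.pairwiseDisjoint_insert_of_notMem (by simpa using hbt)] at ht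
      obtain ⟨hb, hts⟩ := Finset.insert_subset_iff.1 hts
      exact ⟨b, hb, _, ⟨t, hts, rfl, ht.1, rfl⟩, Finset.disjoint_sup_right.2 ht.2,
        (Finset.sup_insert (f := id)).symm⟩

end Lattice

variable {α : Type*} [DecidableEq α]

theorem sized_disjSups {𝒜 ℬ : Finset (Finset α)} {a b : ℕ}
    (h𝒜 : (𝒜 : Set (Finset α)).Sized a) (hℬ : (ℬ : Set (Finset α)).Sized b) :
    ((𝒜 ○ ℬ : Finset (Finset α)) : Set (Finset α)).Sized (a + b) :=
  Finset.forall_disjSups_iff.2 fun Y hY Z hZ hYZ ↦ by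
    rw [Finset.sup_eq_union, Finset.card_union_of_disjoint hYZ, h𝒜 hY, hℬ hZ]

theorem sized_disjSupsPow {𝒜 : Finset (Finset α)} {k : ℕ} (h𝒜 : (𝒜 : Set (Finset α)).Sized k)
    (n : ℕ) : (disjSupsPow 𝒜 n : Set (Finset α)).Sized (n * k) := by
  induction n with
  | zero => simp [disjSupsPow, Set.Sized]
  | succ n ih =>
    rw [add_mul, one_mul, add_comm]
    exact sized_disjSups h𝒜 ih

end DisjSupsPow

section AdmissibleCommittees

variable {α : Type*} [Fintype α] {k η : ℕ} {β : Finset α → ℕ}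

/-- The committees that may be selected: those of size `k` and score at least `η`. -/
def admissibleCommittees (k η : ℕ) (β : Finset α → ℕ) : Finset (Finset α) :=
  {Y | Y.card = k ∧ η ≤ β Y}

theorem mem_admissibleCommittees {Y : Finset α} :
    Y ∈ admissibleCommittees k η β ↔ Y.card = k ∧ η ≤ β Y := by
  simp [admissibleCommittees]

theorem sized_admissibleCommittees : (admissibleCommittees k η β : Set (Finset α)).Sized k :=
  fun _ hY ↦ (mem_admissibleCommittees.1 hY).1

theorem bot_notMem_admissibleCommittees (hk : 1 ≤ k) (η : ℕ) (β : Finset α → ℕ) :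
    ⊥ ∉ admissibleCommittees k η β := by
  rw [mem_admissibleCommittees, Finset.bot_eq_empty, Finset.card_empty]
  lia

end AdmissibleCommittees

section PolyQ

variable {m k η : ℕ} {β : Finset (Fin m) → ℕ}

theorem support_polyQ (hk : 1 ≤ k) (j s : ℕ) :
    (polyQ m k η β (j + 1) s).support =
      if s = (j + 1) * k then (disjSupsPow (admissibleCommittees k η β) (j + 1)).image chi
      else ∅ := by
  have hcommittees :
      (∑ Y ∈ admissibleCommittees k η β, (X : ℕ[X]) ^ chi Y).support =
        (admissibleCommittees k η β).image chi := support_sum_X_pow _ _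
  induction j generalizing s with
  | zero =>
    rw [zero_add, one_mul, disjSupsPow_one, ← hcommittees, polyQ, apply_ite support, support_zero]
    rfl
  | succ j ih =>
    -- Since `1 ≤ k`, the truncation `s - k = 0` never meets the positive size `(j + 1) * k`.
    have hsub : s - k = (j + 1) * k ↔ s = (j + 1 + 1) * k := by lia
    have ih := ih (s - k)
    rw [polyQ, support_reprPoly]
    split_ifs with hs
    · rw [if_pos (hsub.2 hs)] at ih
      rw [show s = k + (j + 1) * k by lia] at ih ⊢
      exact support_hammingProj_mul_of_sized sized_admissibleCommittees
        (sized_disjSupsPow sized_admissibleCommittees (j + 1)) hcommittees ih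
    · rw [if_neg (hsub.not.2 hs), support_eq_empty] at ih
      simp [ih, hammingProj]

theorem polyQ_ne_zero_iff (hk : 1 ≤ k) (j s : ℕ) :
    polyQ m k η β (j + 1) s ≠ 0 ↔
      ∃ U ∈ disjSupsPow (admissibleCommittees k η β) (j + 1), U.card = s := by
  have hsized := sized_disjSupsPow (sized_admissibleCommittees (k := k) (η := η) (β := β)) (j + 1)
  rw [← support_nonempty, support_polyQ hk]
  split_ifs with hs
  · rw [Finset.image_nonempty]
    exact exists_congr fun U ↦ ⟨fun hU ↦ ⟨hU, (hsized hU).trans hs.symm⟩, And.left⟩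
  · simp only [Finset.not_nonempty_empty, false_iff]
    rintro ⟨U, hU, rfl⟩
    exact hs (hsized hU)

end PolyQ

/-- Correctness lemma of the polynomial-multiplication algorithm (egalitarian case):
`q[s,j] ≠ 0` iff there are `j` pairwise disjoint size-`k` committees, each of score at
least `η`, whose union has `s` candidates. -/
theorem polyQ_correct {m k η : ℕ} (hm : 1 ≤ m) (hk : 1 ≤ k)
    (β : Finset (Fin m) → ℕ) (j s : ℕ) (hj : 1 ≤ j) :
    polyQ m k η β j s ≠ 0 ↔
      ∃ 𝒮 : Finset (Finset (Fin m)),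
        𝒮.card = j ∧
        (∀ S ∈ 𝒮, ∀ T ∈ 𝒮, S ≠ T → S ∩ T = ∅) ∧
        (∀ S ∈ 𝒮, S.card = k ∧ η ≤ β S) ∧
        (𝒮.biUnion id).card = s := by
  obtain ⟨j, rfl⟩ := Nat.exists_eq_add_of_le' hj
  simp only [polyQ_ne_zero_iff hk, mem_disjSupsPow (bot_notMem_admissibleCommittees hk η β)]
  constructor
  · rintro ⟨_, ⟨𝒮, h𝒮, hcard, hdisj, rfl⟩, hs⟩
    exact ⟨𝒮, hcard,
      fun S hS T hT hST ↦ Finset.disjoint_iff_inter_eq_empty.1 (hdisj hS hT hST),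
      fun S hS ↦ mem_admissibleCommittees.1 (h𝒮 hS), Finset.sup_eq_biUnion 𝒮 id ▸ hs⟩
  · rintro ⟨𝒮, hcard, hdisj, h𝒮, hs⟩
    exact ⟨_, ⟨𝒮, fun S hS ↦ mem_admissibleCommittees.2 (h𝒮 S hS), hcard,
      fun S hS T hT hST ↦ Finset.disjoint_iff_inter_eq_empty.2 (hdisj S hS T hT hST), rfl⟩,
      Finset.sup_eq_biUnion 𝒮 id ▸ hs⟩
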